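/- arXiv:2412.11950 — 5 statements merged into one kernel-verified Lean document; each statement's English description precedes it below -/
import Mathlib

section
/- Let J be a finite index set, let c > 0, let ρ : J → ℝ satisfy ρ_j ≥ 0 for all j and ρ̄ := Σ_{j∈J} ρ_j ≤ 1, and let η : J → ℝ satisfy 0 < η_j ≤ c for all j. Suppose e : J → ℝ and e_m ∈ ℝ satisfy |e_j| ≤ η_j for all j ∈ J and |e_m| ≤ c. Define ω := (Σ_{j∈J} ρ_j η_j^{-2} + (1 − ρ̄) c^{-2})^{-1/2}. Then the aggregated error satisfies |Σ_{j∈J} ω² ρ_j η_j^{-2} e_j + ω² (1 − ρ̄) c^{-2} e_m| ≤ ω. -/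
open Finset

/- Each error is at most its own bound, so before scaling by `ω ^ 2` the aggregated error is at most
the weighted mean of the inverse bounds. By Cauchy–Schwarz that mean is at most the square root of
the weighted mean of the squared inverse bounds, which is `ω⁻¹`. The prior mean is handled as one
more expert, with weight `1 - ∑ j ∈ J, ρ j`, so that all the weights sum to one. -/

section WeightedFamily

variable {ι E : Type*} [SeminormedAddCommGroup E] [NormedSpace ℝ E]
  {s : Finset ι} {w r : ι → ℝ} {x : ι → E}

theorem sum_mul_le_sqrt_sum_mul_sq (hw : ∀ i ∈ s, 0 ≤ w i) (hw_sum : ∑ i ∈ s, w i ≤ 1)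
    (a : ι → ℝ) : ∑ i ∈ s, w i * a i ≤ √(∑ i ∈ s, w i * a i ^ 2) := by
  have hnonneg : ∀ i ∈ s, 0 ≤ w i * a i ^ 2 := fun i hi ↦ mul_nonneg (hw i hi) (sq_nonneg _)
  apply Real.le_sqrt_of_sq_le
  calc (∑ i ∈ s, w i * a i) ^ 2
      ≤ (∑ i ∈ s, w i) * ∑ i ∈ s, w i * a i ^ 2 :=
        sum_sq_le_sum_mul_sum_of_sq_le_mul s hw hnonneg fun i _ ↦ le_of_eq (by ring)
    _ ≤ ∑ i ∈ s, w i * a i ^ 2 := mul_le_of_le_one_left (sum_nonneg hnonneg) hw_sum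

theorem norm_sum_mul_inv_sq_smul_le_sqrt (hw : ∀ i ∈ s, 0 ≤ w i) (hw_sum : ∑ i ∈ s, w i ≤ 1)
    (hr : ∀ i ∈ s, 0 < r i) (hx : ∀ i ∈ s, ‖x i‖ ≤ r i) :
    ‖∑ i ∈ s, (w i * (r i ^ 2)⁻¹) • x i‖ ≤ √(∑ i ∈ s, w i * (r i ^ 2)⁻¹) := by
  have hterm : ∀ i ∈ s, ‖(w i * (r i ^ 2)⁻¹) • x i‖ ≤ w i * (r i)⁻¹ := fun i hi ↦ by
    have hcoeff : 0 ≤ w i * (r i ^ 2)⁻¹ := mul_nonneg (hw i hi) (by positivity)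
    have hri : r i ≠ 0 := (hr i hi).ne'
    calc ‖(w i * (r i ^ 2)⁻¹) • x i‖
        = w i * (r i ^ 2)⁻¹ * ‖x i‖ := norm_smul_of_nonneg hcoeff _
      _ ≤ w i * (r i ^ 2)⁻¹ * r i := mul_le_mul_of_nonneg_left (hx i hi) hcoeff
      _ = w i * (r i)⁻¹ := by field_simp
  calc ‖∑ i ∈ s, (w i * (r i ^ 2)⁻¹) • x i‖
      ≤ ∑ i ∈ s, w i * (r i)⁻¹ := norm_sum_le_of_le s hterm
    _ ≤ √(∑ i ∈ s, w i * (r i)⁻¹ ^ 2) := sum_mul_le_sqrt_sum_mul_sq hw hw_sum _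
    _ = √(∑ i ∈ s, w i * (r i ^ 2)⁻¹) := by simp only [inv_pow]

theorem sum_mul_inv_sq_pos (hw : ∀ i ∈ s, 0 ≤ w i) (hw_sum : 0 < ∑ i ∈ s, w i)
    (hr : ∀ i ∈ s, 0 < r i) : 0 < ∑ i ∈ s, w i * (r i ^ 2)⁻¹ := by
  obtain ⟨i, hi, hwi⟩ := (sum_pos_iff_of_nonneg hw).1 hw_sum
  exact sum_pos' (fun j hj ↦ mul_nonneg (hw j hj) (by positivity))
    ⟨i, hi, mul_pos hwi (inv_pos.2 (pow_pos (hr i hi) 2))⟩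

/-- The aggregated error bound `ω` of a family of error bounds `r` with weights `w`. When the
weights sum to one it is the power mean of `r` with exponent `-2`. -/
noncomputable def aggregatedBound (s : Finset ι) (w r : ι → ℝ) : ℝ :=
  (∑ i ∈ s, w i * (r i ^ 2)⁻¹) ^ (-(1 : ℝ) / 2)

theorem aggregatedBound_eq_inv_sqrt (hw : ∀ i ∈ s, 0 ≤ w i) :
    aggregatedBound s w r = (√(∑ i ∈ s, w i * (r i ^ 2)⁻¹))⁻¹ := by
  have hnonneg : 0 ≤ ∑ i ∈ s, w i * (r i ^ 2)⁻¹ :=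
    sum_nonneg fun i hi ↦ mul_nonneg (hw i hi) (by positivity)
  rw [aggregatedBound, neg_div, Real.rpow_neg hnonneg, Real.sqrt_eq_rpow]

theorem norm_sum_smul_le_aggregatedBound (hw : ∀ i ∈ s, 0 ≤ w i) (hw_pos : 0 < ∑ i ∈ s, w i)
    (hw_le : ∑ i ∈ s, w i ≤ 1) (hr : ∀ i ∈ s, 0 < r i) (hx : ∀ i ∈ s, ‖x i‖ ≤ r i) :
    ‖∑ i ∈ s, (aggregatedBound s w r ^ 2 * w i * (r i ^ 2)⁻¹) • x i‖ ≤ aggregatedBound s w r := by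
  rw [aggregatedBound_eq_inv_sqrt hw]
  set S := ∑ i ∈ s, w i * (r i ^ 2)⁻¹
  have hS : 0 < √S := Real.sqrt_pos.2 (sum_mul_inv_sq_pos hw hw_pos hr)
  calc ‖∑ i ∈ s, ((√S)⁻¹ ^ 2 * w i * (r i ^ 2)⁻¹) • x i‖
      = (√S)⁻¹ ^ 2 * ‖∑ i ∈ s, (w i * (r i ^ 2)⁻¹) • x i‖ := by
        simp only [mul_assoc, mul_smul _ (_ * _), ← smul_sum,
          norm_smul_of_nonneg (sq_nonneg (√S)⁻¹)]
    _ ≤ (√S)⁻¹ ^ 2 * √S := by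
        gcongr
        exact norm_sum_mul_inv_sq_smul_le_sqrt hw hw_le hr hx
    _ = (√S)⁻¹ := by field_simp

end WeightedFamily

theorem aggregated_error_bound_general {ι E : Type*} [SeminormedAddCommGroup E] [NormedSpace ℝ E]
    (J : Finset ι) (c : ℝ) (hc : 0 < c) (ρ η : ι → ℝ) (e : ι → E) (e_m : E)
    (hρ : ∀ j ∈ J, 0 ≤ ρ j) (hρsum : ∑ j ∈ J, ρ j ≤ 1) (hηpos : ∀ j ∈ J, 0 < η j)
    (he : ∀ j ∈ J, ‖e j‖ ≤ η j) (hem : ‖e_m‖ ≤ c) (ω : ℝ)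
    (hω : ω = (∑ j ∈ J, ρ j * (η j ^ 2)⁻¹ + (1 - ∑ j ∈ J, ρ j) * (c ^ 2)⁻¹) ^ (-(1 : ℝ) / 2)) :
    ‖∑ j ∈ J, (ω ^ 2 * ρ j * (η j ^ 2)⁻¹) • e j
      + (ω ^ 2 * (1 - ∑ j ∈ J, ρ j) * (c ^ 2)⁻¹) • e_m‖ ≤ ω := by
  let w : Option ι → ℝ := fun o ↦ o.elim (1 - ∑ j ∈ J, ρ j) ρ
  let r : Option ι → ℝ := fun o ↦ o.elim c η
  let x : Option ι → E := fun o ↦ o.elim e_m e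
  have hw : ∀ o ∈ J.insertNone, 0 ≤ w o := forall_mem_insertNone.2 ⟨sub_nonneg.2 hρsum, hρ⟩
  have hw_sum : ∑ o ∈ J.insertNone, w o = 1 := by simp [w]
  have hr : ∀ o ∈ J.insertNone, 0 < r o := forall_mem_insertNone.2 ⟨hc, hηpos⟩
  have hx : ∀ o ∈ J.insertNone, ‖x o‖ ≤ r o := forall_mem_insertNone.2 ⟨hem, he⟩
  have hω_eq : ω = aggregatedBound J.insertNone w r := by
    simp [hω, aggregatedBound, w, r, add_comm]
  have hbound := norm_sum_smul_le_aggregatedBound hw (hw_sum ▸ one_pos) hw_sum.le hr hx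
  simpa [← hω_eq, w, r, x, add_comm] using hbound

/-- Deterministic core of Theorem 7: aggregated prediction error bound. -/
theorem aggregated_error_bound {ι : Type*} (J : Finset ι) (c : ℝ) (hc : 0 < c)
    (ρ η e : ι → ℝ) (e_m : ℝ)
    (hρ : ∀ j ∈ J, 0 ≤ ρ j) (hρsum : ∑ j ∈ J, ρ j ≤ 1)
    (hηpos : ∀ j ∈ J, 0 < η j) (hηc : ∀ j ∈ J, η j ≤ c)
    (he : ∀ j ∈ J, |e j| ≤ η j) (hem : |e_m| ≤ c)
    (ω : ℝ)
    (hω : ω = (∑ j ∈ J, ρ j * ((η j) ^ 2)⁻¹ + (1 - ∑ j ∈ J, ρ j) * (c ^ 2)⁻¹) ^ (-(1:ℝ)/2)) :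
    |(∑ j ∈ J, ω ^ 2 * ρ j * ((η j) ^ 2)⁻¹ * e j)
        + ω ^ 2 * (1 - ∑ j ∈ J, ρ j) * (c ^ 2)⁻¹ * e_m| ≤ ω :=
  aggregated_error_bound_general J c hc ρ η e e_m hρ hρsum hηpos he hem ω hω
end

section
/- Let E be a set, let H be a real inner product space, let φ : E → H, let w ∈ H with ‖w‖ ≤ Γ, and define f : E → ℝ by f(x) = ⟨w, φ(x)⟩ and κ : E × E → ℝ by κ(x, x') = ⟨φ(x), φ(x')⟩. Let d : E × E → ℝ be nonnegative and suppose that for all z, x, x' ∈ E, |κ(z, x) − κ(z, x')| ≤ L_κ · d(x, x') for some constant L_κ ≥ 0. Then for all x, x' ∈ E, |f(x) − f(x')|² ≤ 2 Γ² L_κ d(x, x'), i.e., |f(x) − f(x')| ≤ L_f √(d(x, x')) with L_f := √(2 Γ² L_κ). -/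
open scoped RealInnerProductSpace

/-!
The bound `‖f x - f x'‖ ≤ ‖φ x - φ x'‖ * ‖w‖` reduces the claim to the feature map, and
`‖φ x - φ x'‖ ^ 2 = (κ x x - κ x x') - (κ x' x - κ x' x')` consists of two increments of the
kernel in its second argument, each controlled by the Lipschitz condition.
-/

section RCLike

open scoped InnerProductSpace

variable {𝕜 E H : Type*} [RCLike 𝕜] [SeminormedAddCommGroup H] [InnerProductSpace 𝕜 H]

theorem norm_sub_sq_le_norm_inner_sub_inner_add (u v : H) :
    ‖u - v‖ ^ 2 ≤ ‖⟪u, u⟫_𝕜 - ⟪u, v⟫_𝕜‖ + ‖⟪v, u⟫_𝕜 - ⟪v, v⟫_𝕜‖ :=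
  calc ‖u - v‖ ^ 2 = ‖⟪u - v, u - v⟫_𝕜‖ := by
        rw [← inner_self_eq_norm_sq (𝕜 := 𝕜), inner_self_re_eq_norm]
    _ = ‖(⟪u, u⟫_𝕜 - ⟪u, v⟫_𝕜) - (⟪v, u⟫_𝕜 - ⟪v, v⟫_𝕜)‖ := by
        rw [inner_sub_left, inner_sub_right, inner_sub_right]
    _ ≤ ‖⟪u, u⟫_𝕜 - ⟪u, v⟫_𝕜‖ + ‖⟪v, u⟫_𝕜 - ⟪v, v⟫_𝕜‖ := norm_sub_le _ _

theorem norm_inner_sub_inner_sq_le_of_norm_le {w : H} {Γ : ℝ} (hw : ‖w‖ ≤ Γ) (u v : H) :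
    ‖⟪u, w⟫_𝕜 - ⟪v, w⟫_𝕜‖ ^ 2 ≤ Γ ^ 2 * ‖u - v‖ ^ 2 :=
  calc ‖⟪u, w⟫_𝕜 - ⟪v, w⟫_𝕜‖ ^ 2 = ‖⟪u - v, w⟫_𝕜‖ ^ 2 := by rw [inner_sub_left]
    _ ≤ (‖u - v‖ * ‖w‖) ^ 2 := by gcongr; exact norm_inner_le_norm _ _
    _ ≤ (‖u - v‖ * Γ) ^ 2 := by gcongr
    _ = Γ ^ 2 * ‖u - v‖ ^ 2 := by ring

theorem norm_featureMap_sub_sq_le {φ : E → H} {κ : E → E → 𝕜} {d : E → E → ℝ} {L : ℝ}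
    (hκ : ∀ x x', κ x x' = ⟪φ x, φ x'⟫_𝕜)
    (hlip : ∀ z x x', ‖κ z x - κ z x'‖ ≤ L * d x x') (x x' : E) :
    ‖φ x - φ x'‖ ^ 2 ≤ 2 * (L * d x x') :=
  calc ‖φ x - φ x'‖ ^ 2 ≤ ‖κ x x - κ x x'‖ + ‖κ x' x - κ x' x'‖ := by
        simpa only [hκ] using norm_sub_sq_le_norm_inner_sub_inner_add (𝕜 := 𝕜) (φ x) (φ x')
    _ ≤ L * d x x' + L * d x x' := add_le_add (hlip x x x') (hlip x' x x')
    _ = 2 * (L * d x x') := (two_mul _).symm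

theorem rkhs_variation_bound_general {φ : E → H} {w : H} {Γ : ℝ} (hw : ‖w‖ ≤ Γ)
    {f : E → 𝕜} {κ : E → E → 𝕜} {d : E → E → ℝ} {L : ℝ} (hL : 0 ≤ L)
    (hf : ∀ x, f x = ⟪φ x, w⟫_𝕜) (hκ : ∀ x x', κ x x' = ⟪φ x, φ x'⟫_𝕜)
    (hlip : ∀ z x x', ‖κ z x - κ z x'‖ ≤ L * d x x') (x x' : E) :
    ‖f x - f x'‖ ^ 2 ≤ 2 * Γ ^ 2 * L * d x x' ∧
      ‖f x - f x'‖ ≤ √(2 * Γ ^ 2 * L) * √(d x x') := by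
  have sq_le : ‖f x - f x'‖ ^ 2 ≤ 2 * Γ ^ 2 * L * d x x' :=
    calc ‖f x - f x'‖ ^ 2 ≤ Γ ^ 2 * ‖φ x - φ x'‖ ^ 2 := by
          simpa only [hf] using norm_inner_sub_inner_sq_le_of_norm_le hw (φ x) (φ x')
      _ ≤ Γ ^ 2 * (2 * (L * d x x')) := by gcongr; exact norm_featureMap_sub_sq_le hκ hlip x x'
      _ = 2 * Γ ^ 2 * L * d x x' := by ring
  refine ⟨sq_le, ?_⟩
  rw [← Real.sqrt_mul (by positivity)]
  exact Real.le_sqrt_of_sq_le sq_le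

end RCLike

/-- Deterministic part of Lemma 3: variation bound of an RKHS function
via Lipschitz continuity of the kernel. -/
theorem rkhs_variation_bound {E H : Type*} [NormedAddCommGroup H] [InnerProductSpace ℝ H]
    (φ : E → H) (w : H) (Γ : ℝ) (hw : ‖w‖ ≤ Γ)
    (f : E → ℝ) (κ : E → E → ℝ) (d : E → E → ℝ) (L_κ : ℝ) (hL : 0 ≤ L_κ)
    (hf : ∀ x, f x = ⟪w, φ x⟫) (hκ : ∀ x x', κ x x' = ⟪φ x, φ x'⟫)
    (hd : ∀ x x', 0 ≤ d x x')
    (hlip : ∀ z x x', |κ z x - κ z x'| ≤ L_κ * d x x') :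
    ∀ x x' : E, |f x - f x'| ^ 2 ≤ 2 * Γ ^ 2 * L_κ * d x x' ∧
      |f x - f x'| ≤ Real.sqrt (2 * Γ ^ 2 * L_κ) * Real.sqrt (d x x') :=
  rkhs_variation_bound_general hw hL (fun x => (hf x).trans (real_inner_comm _ _)) hκ hlip
end

section
/- Let n ≥ 1, σ > 0 and l > 0, and define the squared exponential kernel κ : ℝⁿ × ℝⁿ → ℝ by κ(x, x') = σ² exp(−‖x − x'‖² / (2 l²)), where ‖·‖ is the Euclidean norm. Then for all x, x₁, x₂ ∈ ℝⁿ, |κ(x, x₁) − κ(x, x₂)| ≤ (σ² / l) · exp(−1/2) · ‖x₁ − x₂‖. -/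
/-!
The profile `t ↦ exp (-t ^ 2 / 2)` has derivative `-t * exp (-t ^ 2 / 2)`, whose absolute value is
largest at `t = ±1`, where it equals `exp (-1 / 2)`. The kernel `κ x` is `σ ^ 2` times this profile
evaluated at `dist x · / l`, and the latter function is Lipschitz with constant `1 / l`.
-/

open Real

lemma abs_mul_exp_neg_sq_div_two_le (t : ℝ) : |t| * exp (-t ^ 2 / 2) ≤ exp (-1 / 2) := by
  refine le_of_sq_le_sq ?_ (exp_pos _).le
  calc (|t| * exp (-t ^ 2 / 2)) ^ 2 = t ^ 2 * exp (-t ^ 2) := by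
        rw [mul_pow, sq_abs, ← exp_nat_mul]
        ring_nf
    _ ≤ exp (-1) := mul_exp_neg_le_exp_neg_one (t ^ 2)
    _ = exp (-1 / 2) ^ 2 := by
        rw [← exp_nat_mul]
        norm_num

lemma hasDerivAt_exp_neg_sq_div_two (t : ℝ) :
    HasDerivAt (fun s ↦ exp (-s ^ 2 / 2)) (-t * exp (-t ^ 2 / 2)) t := by
  have exponent_deriv : HasDerivAt (fun s : ℝ ↦ -s ^ 2 / 2) (-t) t := by
    simpa [neg_div] using (hasDerivAt_pow 2 t).fun_neg.div_const 2
  simpa only [mul_comm] using exponent_deriv.exp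

lemma lipschitzWith_exp_neg_sq_div_two :
    LipschitzWith (exp (-1 / 2)).toNNReal fun t ↦ exp (-t ^ 2 / 2) := by
  refine lipschitzWith_of_nnnorm_deriv_le
    (fun t ↦ (hasDerivAt_exp_neg_sq_div_two t).differentiableAt) fun t ↦ ?_
  rw [(hasDerivAt_exp_neg_sq_div_two t).deriv, ← norm_toNNReal]
  refine toNNReal_le_toNNReal ?_
  simpa only [norm_mul, norm_neg, norm_eq_abs, abs_exp] using abs_mul_exp_neg_sq_div_two_le t

theorem se_kernel_lipschitz_general {X : Type*} [PseudoMetricSpace X] (σ : ℝ) {l : ℝ} (hl : 0 < l)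
    {κ : X → X → ℝ} (hκ : ∀ x x', κ x x' = σ ^ 2 * exp (-dist x x' ^ 2 / (2 * l ^ 2)))
    (x x₁ x₂ : X) :
    |κ x x₁ - κ x x₂| ≤ σ ^ 2 / l * exp (-1 / 2) * dist x₁ x₂ := by
  have kernel_eq (x' : X) : κ x x' = σ ^ 2 * exp (-(dist x x' / l) ^ 2 / 2) := by
    rw [hκ]
    congr 2
    field_simp
  have profile_lipschitz (a b : ℝ) :
      |exp (-a ^ 2 / 2) - exp (-b ^ 2 / 2)| ≤ exp (-1 / 2) * |a - b| := by
    simpa only [dist_eq, coe_toNNReal _ (exp_pos _).le] using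
      lipschitzWith_exp_neg_sq_div_two.dist_le_mul a b
  have dist_lipschitz : |dist x x₁ - dist x x₂| ≤ dist x₁ x₂ := by
    simpa only [dist_comm x] using abs_dist_sub_le x₁ x₂ x
  calc |κ x x₁ - κ x x₂|
      = σ ^ 2 * |exp (-(dist x x₁ / l) ^ 2 / 2) - exp (-(dist x x₂ / l) ^ 2 / 2)| := by
        rw [kernel_eq, kernel_eq, ← mul_sub, abs_mul, abs_sq]
    _ ≤ σ ^ 2 * (exp (-1 / 2) * |dist x x₁ / l - dist x x₂ / l|) := by
        gcongr
        exact profile_lipschitz _ _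
    _ = σ ^ 2 / l * exp (-1 / 2) * |dist x x₁ - dist x x₂| := by
        rw [← sub_div, abs_div, abs_of_pos hl]
        ring
    _ ≤ σ ^ 2 / l * exp (-1 / 2) * dist x₁ x₂ := by gcongr

/-- Lemma 4: Lipschitz continuity of the squared exponential kernel. -/
theorem se_kernel_lipschitz (n : ℕ) (hn : 1 ≤ n) (σ l : ℝ) (hσ : 0 < σ) (hl : 0 < l)
    (κ : EuclideanSpace ℝ (Fin n) → EuclideanSpace ℝ (Fin n) → ℝ)
    (hκ : ∀ x x', κ x x' = σ ^ 2 * Real.exp (-‖x - x'‖ ^ 2 / (2 * l ^ 2))) :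
    ∀ x x₁ x₂ : EuclideanSpace ℝ (Fin n),
      |κ x x₁ - κ x x₂| ≤ σ ^ 2 / l * Real.exp (-1 / 2) * ‖x₁ - x₂‖ := by
  simp only [← dist_eq_norm] at hκ ⊢
  exact se_kernel_lipschitz_general σ hl hκ
end

section
/- Let σ > 0, l > 0 and p > 0, and define g : ℝ → ℝ by g(r) = σ² exp(−2 sin²(π r / p) / l²). Then g is Lipschitz continuous with constant (2π σ² / (p l)) · exp(−1/2), i.e., for all r₁, r₂ ∈ ℝ, |g(r₁) − g(r₂)| ≤ (2π σ² / (p l)) exp(−1/2) · |r₁ − r₂|. -/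
/-!
With `b = 2 / l ^ 2`, the kernel is `σ ^ 2` times the Gaussian `exp (-b * x ^ 2)` evaluated at
`x = sin (π / p * r)`. The slope of the Gaussian is steepest at its inflection points, where
`2 * b * x ^ 2 = 1`, so its Lipschitz constant is `√(2 * b) * exp (-1 / 2)`. As `sin` is
`1`-Lipschitz, the inner function contributes only the factor `π / p`.
-/

theorem sqrt_mul_abs_mul_exp_neg_mul_sq_le {b : ℝ} (hb : 0 ≤ b) (x : ℝ) :
    √(2 * b) * |x| * Real.exp (-b * x ^ 2) ≤ Real.exp (-1 / 2) := by
  refine (pow_le_pow_iff_left₀ (by positivity) (by positivity) two_ne_zero).mp ?_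
  calc (√(2 * b) * |x| * Real.exp (-b * x ^ 2)) ^ 2
      = 2 * b * x ^ 2 * Real.exp (-(2 * b * x ^ 2)) := by
        rw [mul_pow, mul_pow, Real.sq_sqrt (by positivity), sq_abs, ← Real.exp_nat_mul]
        ring_nf
    _ ≤ Real.exp (-1) := Real.mul_exp_neg_le_exp_neg_one _
    _ = Real.exp (-1 / 2) ^ 2 := by rw [← Real.exp_nat_mul]; norm_num

theorem hasDerivAt_exp_neg_mul_sq (b x : ℝ) :
    HasDerivAt (fun y : ℝ ↦ Real.exp (-b * y ^ 2)) (-(2 * b * x) * Real.exp (-b * x ^ 2)) x := by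
  convert ((hasDerivAt_pow 2 x).const_mul (-b)).exp using 1
  ring

theorem abs_deriv_exp_neg_mul_sq_le {b : ℝ} (hb : 0 ≤ b) (x : ℝ) :
    |deriv (fun y : ℝ ↦ Real.exp (-b * y ^ 2)) x| ≤ √(2 * b) * Real.exp (-1 / 2) := by
  have abs_two_mul : |2 * b * x| = √(2 * b) * (√(2 * b) * |x|) := by
    rw [← mul_assoc, Real.mul_self_sqrt (by positivity), abs_mul, abs_of_nonneg (by positivity)]
  calc |deriv (fun y : ℝ ↦ Real.exp (-b * y ^ 2)) x|
      = √(2 * b) * (√(2 * b) * |x| * Real.exp (-b * x ^ 2)) := by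
        rw [(hasDerivAt_exp_neg_mul_sq b x).deriv, abs_mul, abs_neg, abs_two_mul, Real.abs_exp]
        ring
    _ ≤ √(2 * b) * Real.exp (-1 / 2) := by
        gcongr
        exact sqrt_mul_abs_mul_exp_neg_mul_sq_le hb x

theorem abs_exp_neg_mul_sq_sub_le {b : ℝ} (hb : 0 ≤ b) (x y : ℝ) :
    |Real.exp (-b * x ^ 2) - Real.exp (-b * y ^ 2)| ≤
      √(2 * b) * Real.exp (-1 / 2) * |x - y| :=
  convex_univ.norm_image_sub_le_of_norm_deriv_le
    (fun z _ ↦ (hasDerivAt_exp_neg_mul_sq b z).differentiableAt)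
    (fun z _ ↦ abs_deriv_exp_neg_mul_sq_le hb z) (Set.mem_univ y) (Set.mem_univ x)

theorem abs_sin_mul_sub_sin_mul_le (c x y : ℝ) :
    |Real.sin (c * x) - Real.sin (c * y)| ≤ |c| * |x - y| :=
  calc |Real.sin (c * x) - Real.sin (c * y)| ≤ |c * x - c * y| := Real.abs_sin_sub_sin_le _ _
    _ = |c| * |x - y| := by rw [← mul_sub, abs_mul]

theorem abs_exp_neg_mul_sin_sq_sub_le {b : ℝ} (hb : 0 ≤ b) (c x y : ℝ) :
    |Real.exp (-b * Real.sin (c * x) ^ 2) - Real.exp (-b * Real.sin (c * y) ^ 2)| ≤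
      √(2 * b) * Real.exp (-1 / 2) * (|c| * |x - y|) :=
  (abs_exp_neg_mul_sq_sub_le hb _ _).trans <| by
    gcongr
    exact abs_sin_mul_sub_sin_mul_le c x y

/-- Corollary: Lipschitz continuity of the periodic kernel (constant valid for all l > 0). -/
theorem periodic_kernel_lipschitz (σ l p : ℝ) (hσ : 0 < σ) (hl : 0 < l) (hp : 0 < p)
    (g : ℝ → ℝ)
    (hg : ∀ r, g r = σ ^ 2 * Real.exp (-2 * Real.sin (Real.pi * r / p) ^ 2 / l ^ 2)) :
    ∀ r₁ r₂ : ℝ,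
      |g r₁ - g r₂| ≤ 2 * Real.pi * σ ^ 2 / (p * l) * Real.exp (-1 / 2) * |r₁ - r₂| := by
  intro r₁ r₂
  have g_eq (r : ℝ) : g r = σ ^ 2 * Real.exp (-(2 / l ^ 2) * Real.sin (Real.pi / p * r) ^ 2) := by
    rw [hg]
    ring_nf
  have sqrt_eq : √(2 * (2 / l ^ 2)) = 2 / l := by
    rw [show 2 * (2 / l ^ 2) = (2 / l) ^ 2 by ring, Real.sqrt_sq (by positivity)]
  have abs_pi_div : |Real.pi / p| = Real.pi / p := abs_of_pos (by positivity)
  calc |g r₁ - g r₂|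
      ≤ σ ^ 2 * (√(2 * (2 / l ^ 2)) * Real.exp (-1 / 2) * (|Real.pi / p| * |r₁ - r₂|)) := by
        rw [g_eq, g_eq, ← mul_sub, abs_mul, abs_sq]
        gcongr
        exact abs_exp_neg_mul_sin_sq_sub_le (by positivity) _ _ _
    _ = 2 * Real.pi * σ ^ 2 / (p * l) * Real.exp (-1 / 2) * |r₁ - r₂| := by
        rw [sqrt_eq, abs_pi_div]
        ring
end

section
/- Let σ > 0, p > 0 and l ≥ 2, and define g : ℝ → ℝ by g(r) = σ² exp(−2 sin²(π r / p) / l²). Then g is Lipschitz continuous with constant (4π σ² / (p l²)) · exp(−2 / l²), i.e., for all r₁, r₂ ∈ ℝ, |g(r₁) − g(r₂)| ≤ (4π σ² / (p l²)) exp(−2/l²) · |r₁ − r₂|. -/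
/-!
After rescaling `r` by `π / p`, the kernel is a multiple of `x ↦ exp (-(a * sin x ^ 2))` with
`a = 2 / l ^ 2`, whose derivative is `-2 * a * (sin x * cos x) * exp (-(a * sin x ^ 2))`. Since
`exp (-a) = exp (-(a * cos x ^ 2)) * exp (-(a * sin x ^ 2))`, bounding this derivative by
`2 * a * exp (-a)` amounts to `|sin x * cos x| ≤ exp (-(a * cos x ^ 2))`. For `a ≤ 1` this follows
from the case `a = 1`, which is the inequality `t * (1 - t) ≤ exp (-2 * t)` at `t = cos x ^ 2`.
-/

section

open Real

theorem mul_one_sub_le_exp_neg_two_mul (t : ℝ) : t * (1 - t) ≤ exp (-2 * t) := by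
  -- Bound `t` and `3 * (1 - t)` by `x ≤ exp (x - 1)`: the exponents
  -- add up to `1 - 2 * t`, and the factor `1 / 3` absorbs `exp 1`.
  have le_exp : t ≤ exp (t - 1) := by linarith [add_one_le_exp (t - 1)]
  have one_sub_le_exp : 1 - t ≤ exp (2 - 3 * t) / 3 := by
    linarith [add_one_le_exp (2 - 3 * t)]
  calc t * (1 - t) ≤ exp (t - 1) * (exp (2 - 3 * t) / 3) := by
        rcases le_total 0 t with ht | ht
        · exact mul_le_mul_of_nonneg le_exp one_sub_le_exp ht (by positivity)
        · exact mul_le_mul le_exp one_sub_le_exp (by linarith) (exp_pos _).le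
    _ = exp 1 / 3 * exp (-2 * t) := by
        rw [← mul_div_assoc, ← exp_add, div_mul_eq_mul_div, ← exp_add]
        ring_nf
    _ ≤ exp (-2 * t) :=
        mul_le_of_le_one_left (exp_pos _).le (by linarith [exp_one_lt_three])

theorem abs_sin_mul_cos_le_exp_neg_cos_sq (x : ℝ) : |sin x * cos x| ≤ exp (-cos x ^ 2) := by
  refine abs_le_of_sq_le_sq ?_ (exp_pos _).le
  calc (sin x * cos x) ^ 2 = cos x ^ 2 * (1 - cos x ^ 2) := by rw [mul_pow, sin_sq, mul_comm]
    _ ≤ exp (-2 * cos x ^ 2) := mul_one_sub_le_exp_neg_two_mul _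
    _ = exp (-cos x ^ 2) ^ 2 := by rw [← exp_nat_mul]; ring_nf

theorem abs_sin_mul_cos_mul_exp_neg_mul_sin_sq_le {a : ℝ} (ha : a ≤ 1) (x : ℝ) :
    |sin x * cos x| * exp (-(a * sin x ^ 2)) ≤ exp (-a) := by
  have exp_le : exp (-cos x ^ 2) ≤ exp (-(a * cos x ^ 2)) :=
    exp_le_exp.mpr (neg_le_neg (mul_le_of_le_one_left (sq_nonneg _) ha))
  calc |sin x * cos x| * exp (-(a * sin x ^ 2))
      ≤ exp (-(a * cos x ^ 2)) * exp (-(a * sin x ^ 2)) := by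
        gcongr
        exact (abs_sin_mul_cos_le_exp_neg_cos_sq x).trans exp_le
    _ = exp (-a) := by
        rw [← exp_add, ← neg_add, ← mul_add, cos_sq_add_sin_sq, mul_one]

theorem hasDerivAt_exp_neg_mul_sin_sq (a x : ℝ) :
    HasDerivAt (fun x ↦ exp (-(a * sin x ^ 2)))
      (-(2 * a) * (sin x * cos x * exp (-(a * sin x ^ 2)))) x := by
  convert (((hasDerivAt_sin x).fun_pow 2).const_mul a).fun_neg.exp using 1
  ring

theorem abs_exp_neg_mul_sin_sq_sub_le_s15 {a : ℝ} (ha : a ≤ 1) (x y : ℝ) :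
    |exp (-(a * sin x ^ 2)) - exp (-(a * sin y ^ 2))| ≤ 2 * |a| * exp (-a) * |x - y| := by
  refine convex_univ.norm_image_sub_le_of_norm_hasDerivWithin_le
    (fun z _ ↦ (hasDerivAt_exp_neg_mul_sin_sq a z).hasDerivWithinAt) (fun z _ ↦ ?_)
    (Set.mem_univ y) (Set.mem_univ x)
  rw [norm_eq_abs, abs_mul, abs_neg, abs_mul 2 a, abs_two, abs_mul _ (exp _), abs_exp]
  gcongr
  exact abs_sin_mul_cos_mul_exp_neg_mul_sin_sq_le ha z

end

theorem periodic_kernel_lipschitz_large_l_general (σ p l : ℝ) (hp : 0 < p) (hl : 2 ≤ l ^ 2)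
    (g : ℝ → ℝ)
    (hg : ∀ r, g r = σ ^ 2 * Real.exp (-2 * Real.sin (Real.pi * r / p) ^ 2 / l ^ 2)) (r₁ r₂ : ℝ) :
    |g r₁ - g r₂| ≤ 4 * Real.pi * σ ^ 2 / (p * l ^ 2) * Real.exp (-2 / l ^ 2) * |r₁ - r₂| := by
  have l_sq_pos : 0 < l ^ 2 := by linarith
  have hg' (r : ℝ) :
      g r = σ ^ 2 * Real.exp (-(2 / l ^ 2 * Real.sin (Real.pi * r / p) ^ 2)) := by
    rw [hg]
    ring_nf
  have rescale : |Real.pi * r₁ / p - Real.pi * r₂ / p| = Real.pi / p * |r₁ - r₂| := by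
    rw [← sub_div, ← mul_sub, abs_div, abs_mul, abs_of_pos Real.pi_pos, abs_of_pos hp,
      mul_div_right_comm]
  rw [hg', hg', ← mul_sub, abs_mul, abs_of_nonneg (sq_nonneg σ)]
  calc _ ≤ σ ^ 2 * (2 * |2 / l ^ 2| * Real.exp (-(2 / l ^ 2)) *
          |Real.pi * r₁ / p - Real.pi * r₂ / p|) := by
        gcongr
        exact abs_exp_neg_mul_sin_sq_sub_le_s15 ((div_le_one l_sq_pos).mpr hl) _ _
    _ = _ := by
        rw [rescale, abs_of_pos (div_pos two_pos l_sq_pos), neg_div]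
        ring

/-- Corollary: Lipschitz continuity of the periodic kernel in the case l ≥ 2 (σ_l² ≥ 4). -/
theorem periodic_kernel_lipschitz_large_l (σ p l : ℝ) (hσ : 0 < σ) (hp : 0 < p) (hl : 2 ≤ l)
    (g : ℝ → ℝ)
    (hg : ∀ r, g r = σ ^ 2 * Real.exp (-2 * Real.sin (Real.pi * r / p) ^ 2 / l ^ 2)) :
    ∀ r₁ r₂ : ℝ,
      |g r₁ - g r₂| ≤ 4 * Real.pi * σ ^ 2 / (p * l ^ 2) * Real.exp (-2 / l ^ 2) * |r₁ - r₂| :=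
  periodic_kernel_lipschitz_large_l_general σ p l hp (by nlinarith) g hg
end
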